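/- Let Y ⊆ X be a compact A-minimal subset, α = α_{ij} a root, and Y_α ⊆ Y an A_α-minimal subset with A·Y_α = Y. Suppose there exist y₁ ∈ Y_α and s₀ ≠ 0 such that u_α(s₀)·y₁ ∈ Y, where u_α(s) = I + s·E_{ij}. Then u_α(s₀)·y₁ ∈ Y_α, and the full root group U_α = {u_α(s) : s ∈ ℝ} stabilizes Y_α, i.e. u_α(s)·Y_α = Y_α for every s ∈ ℝ. -/

import Mathlib

/-!
All the relevant elements commute with `A_α`, so the stabilizer of `Y_α` can be studied inside the
`ax + b` group generated by `U_α` and a one-parameter group `b t` (`diagFlow`) of `A` with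
`α (b t) = e^t`. If an element `g` commuting with `A_α` sends one point of `Y_α` into `Y_α`, then
`g` stabilizes `Y_α`, by minimality (`image_eq_of_smul_mem`).

Since `A = A_α · {b t}`, the compact set `Y` is the union of the translates `b t • Y_α`. A Baire
category argument shows that a bounded range of `t` suffices, hence some `b c` with `c > 0`
stabilizes `Y_α` (`exists_pos_smul_mem`). Likewise `u_α(s₀) • y₁ ∈ A • Y_α` gives `t` such that
`b (-t) * u_α(s₀)` stabilizes `Y_α`. The commutator of these two elements is a nontrivial
`u_α(p)`. Conjugating it by powers of `b (-c)` shows that the `s` with `u_α(s)` stabilizing `Y_α`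
form a dense subgroup of `ℝ`; as `Y_α` is closed, this subgroup is all of `ℝ`
(`unipotent_stabilizes`).

Discreteness of `Γ` makes `G/Γ` Hausdorff, so that the compact set `Y_α` is closed.
-/

open Matrix MeasureTheory Pointwise

/-- `G = SL_n(ℝ)`. -/
abbrev SLR (n : ℕ) := Matrix.SpecialLinearGroup (Fin n) ℝ

/-- The standard topology on `SL_n(ℝ)`, as a subspace of the matrices. -/
instance (n : ℕ) : TopologicalSpace (SLR n) :=
  inferInstanceAs (TopologicalSpace {A : Matrix (Fin n) (Fin n) ℝ // A.det = 1})

/-- `Γ = SL_n(ℤ)`, viewed as a subgroup of `SL_n(ℝ)`. -/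
def GammaZ (n : ℕ) : Subgroup (SLR n) :=
  (Matrix.SpecialLinearGroup.map (n := Fin n) (Int.castRingHom ℝ)).range

/-- `A`: the set of diagonal matrices in `SL_n(ℝ)` with positive diagonal entries. -/
def posDiag (n : ℕ) : Set (SLR n) :=
  {g | (∀ i j, i ≠ j → g.1 i j = 0) ∧ (∀ i, 0 < g.1 i i)}

/-- `A_α`: the kernel of the root `α = α_{ij}`, `α(a) = a_{ii}/a_{jj}`, i.e. the set of
`a ∈ A` with `a_{ii} = a_{jj}`. -/
def rootKer (n : ℕ) (i j : Fin n) : Set (SLR n) :=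
  {g | g ∈ posDiag n ∧ g.1 i i = g.1 j j}

/-- `u_α(s) = I + s E_{ij}`, an element of the root group `U_α`. -/
noncomputable def elemU (n : ℕ) {i j : Fin n} (hij : i ≠ j) (s : ℝ) : SLR n :=
  ⟨Matrix.transvection i j s, Matrix.det_transvection_of_ne i j hij s⟩

/-- A nonempty subset `Z` is `S`-minimal if it is invariant under each element of `S`
and every `S`-orbit of a point of `Z` is dense in `Z`. -/
def IsMinimalOn {G X : Type*} [SMul G X] [TopologicalSpace X] (S : Set G) (Z : Set X) : Prop :=
  Z.Nonempty ∧ (∀ g ∈ S, (g • ·) '' Z = Z) ∧ ∀ z ∈ Z, Z ⊆ closure ((· • z) '' S)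

/-- `Γ` is a lattice in `G`: a discrete subgroup such that `G/Γ` carries a (nonzero)
finite `G`-invariant Borel measure. -/
def IsLattice {G : Type*} [Group G] [TopologicalSpace G] (Γ : Subgroup G) : Prop :=
  DiscreteTopology Γ ∧
    ∃ μ : @Measure (G ⧸ Γ) (borel _),
      μ Set.univ ≠ 0 ∧ μ Set.univ ≠ ⊤ ∧
      ∀ (g : G) (s : Set (G ⧸ Γ)), μ ((g • ·) ⁻¹' s) = μ s


/-! ### Minimal sets for an abstract action -/

/-- Two `H`-minimal sets that meet coincide; here the second set is the translate of `Z` by an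
element `g` commuting with `H`. -/
theorem image_eq_of_smul_mem {G X : Type*} [Group G] [TopologicalSpace X] [MulAction G X]
    [ContinuousConstSMul G X] {H : Set G} {Z : Set X} (hZc : IsClosed Z) (hZ : IsMinimalOn H Z)
    {g : G} (hg : ∀ h ∈ H, Commute g h) {z : X} (hz : z ∈ Z) (hgz : g • z ∈ Z) :
    (g • ·) '' Z = Z := by
  have key : ∀ g : G, (∀ h ∈ H, Commute g h) → ∀ z ∈ Z, g • z ∈ Z → ∀ w ∈ Z, g • w ∈ Z := by
    intro g hg z hz hgz w hw
    have h1 : closure ((· • z) '' H) ⊆ (g • ·) ⁻¹' Z := by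
      refine closure_minimal ?_ (hZc.preimage (continuous_const_smul g))
      rintro _ ⟨h, hh, rfl⟩
      change g • h • z ∈ Z
      rw [smul_smul, (hg h hh).eq, mul_smul, ← hZ.2.1 h hh]
      exact ⟨_, hgz, rfl⟩
    exact h1 (hZ.2.2 z hz hw)
  apply Set.Subset.antisymm
  · rintro _ ⟨w, hw, rfl⟩
    exact key g hg z hz hgz w hw
  · intro w hw
    refine ⟨g⁻¹ • w, key g⁻¹ (fun h hh => (hg h hh).inv_left) (g • z) hgz ?_ w hw, ?_⟩
    · simpa using hz
    · simp

/-- The one-parameter group `b` returns to `Z`. By Baire, some `K N = {b t • z | |t| ≤ N, z ∈ Z}`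
has interior in `Y`; minimality and compactness of `Y` then put `Y` inside a single
`{b t • z | |t| ≤ R, z ∈ Z}`, and `b (2 * R + 1)` moves `Z` into that set. -/
theorem exists_pos_smul_mem {G X : Type*} [Group G] [TopologicalSpace X] [T2Space X]
    [MulAction G X] [ContinuousConstSMul G X] {A H : Set G} {Y Z : Set X} {b : ℝ → G}
    (hYc : IsCompact Y) (hY : IsMinimalOn A Y) (hZc : IsCompact Z) (hZ : IsMinimalOn H Z)
    (hAZ : A • Z = Y)
    (hb_add : ∀ s t, b (s + t) = b s * b t)
    (hbA : ∀ t, b t ∈ A) (hbH : ∀ t, ∀ h ∈ H, Commute (b t) h)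
    (hA : ∀ a ∈ A, ∃ h ∈ H, ∃ t, a = h * b t)
    (hb_cont : Continuous fun p : ℝ × X => b p.1 • p.2) :
    ∃ c > 0, ∃ z ∈ Z, b c • z ∈ Z := by
  have hinv : ∀ h ∈ H, ∀ z ∈ Z, h⁻¹ • z ∈ Z := by
    intro h hh z hz
    rw [← hZ.2.1 h hh] at hz
    obtain ⟨w, hw, rfl⟩ := hz
    simpa using hw
  have hb0 : b 0 = 1 := by
    have := hb_add 0 0
    simpa using this
  have hbneg : ∀ t, (b t)⁻¹ = b (-t) := by
    intro t
    rw [inv_eq_iff_mul_eq_one, ← hb_add, add_neg_cancel, hb0]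
  have hAY : ∀ a ∈ A, ∀ y ∈ Y, a • y ∈ Y := by
    intro a ha y hy
    rw [← hY.2.1 a ha]
    exact ⟨y, hy, rfl⟩
  let K : ℕ → Set X := fun N => (fun p : ℝ × X => b p.1 • p.2) '' (Set.Icc (-(N : ℝ)) N ×ˢ Z)
  have hKc : ∀ N, IsClosed (K N) := fun N =>
    ((isCompact_Icc.prod hZc).image hb_cont).isClosed
  have hYne : Nonempty Y := hY.1.to_subtype
  have hYcs : CompactSpace Y := isCompact_iff_compactSpace.mp hYc
  obtain ⟨N, hN⟩ := nonempty_interior_of_iUnion_of_closed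
    (f := fun N => (Subtype.val : Y → X) ⁻¹' K N)
    (fun N => (hKc N).preimage continuous_subtype_val) (by
      refine Set.eq_univ_of_forall ?_
      rintro ⟨y, hy⟩
      rw [← hAZ] at hy
      obtain ⟨a, ha, z, hz, rfl⟩ := hy
      obtain ⟨h, hh, t, rfl⟩ := hA a ha
      obtain ⟨N, hN⟩ := exists_nat_ge |t|
      refine Set.mem_iUnion.2 ⟨N, (t, h • z), ⟨abs_le.1 hN, ?_⟩, ?_⟩
      · rw [← hZ.2.1 h hh]
        exact ⟨z, hz, rfl⟩
      · change b t • h • z = (h * b t) • z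
        rw [smul_smul, (hbH t h hh).eq])
  obtain ⟨⟨y₀, hy₀⟩, hy₀N⟩ := hN
  obtain ⟨W, hWN, hWo, hyW⟩ := mem_interior.1 hy₀N
  obtain ⟨V, hVo, rfl⟩ := isOpen_induced_iff.1 hWo
  let U : ℕ → Set X := fun M =>
    ⋃ p ∈ {p : G × ℝ | p.1 ∈ H ∧ |p.2| ≤ M ∧ p.1 * b p.2 ∈ A}, ((p.1 * b p.2) • ·) ⁻¹' V
  obtain ⟨M, hM⟩ := hYc.elim_directed_cover U
    (fun M => isOpen_biUnion fun p _ => hVo.preimage (continuous_const_smul _))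
    (by
      intro y hy
      obtain ⟨_, hxV, a, ha, rfl⟩ := mem_closure_iff.1 (hY.2.2 y hy hy₀) V hVo hyW
      obtain ⟨h, hh, t, rfl⟩ := hA a ha
      obtain ⟨M, hM⟩ := exists_nat_ge |t|
      exact Set.mem_iUnion.2 ⟨M, Set.mem_biUnion (x := (h, t)) ⟨hh, hM, ha⟩ hxV⟩)
    (Monotone.directed_le (by
      intro M M' hMM
      refine Set.biUnion_subset_biUnion_left ?_
      rintro p ⟨h1, h2, h3⟩
      exact ⟨h1, h2.trans (by exact_mod_cast hMM), h3⟩))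
  have hcover : ∀ y ∈ Y, ∃ r : ℝ, |r| ≤ N + M ∧ ∃ z ∈ Z, y = b r • z := by
    intro y hy
    obtain ⟨⟨h, t⟩, ⟨hh, ht, ha⟩, hyV⟩ := Set.mem_iUnion₂.1 (hM hy)
    obtain ⟨⟨s, z⟩, ⟨hs, hz⟩, hsz⟩ := @hWN ⟨_, hAY _ ha y hy⟩ hyV
    refine ⟨s - t, ?_, h⁻¹ • z, hinv h hh z hz, ?_⟩
    · exact (abs_sub s t).trans (add_le_add (abs_le.2 hs) ht)
    · change b s • z = (h * b t) • y at hsz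
      rw [← inv_smul_eq_iff, _root_.mul_inv_rev, hbneg, smul_smul, mul_assoc,
        ← ((hbH s h hh).inv_right).eq, ← mul_assoc, ← hb_add, mul_smul] at hsz
      rw [← hsz, neg_add_eq_sub]
  obtain ⟨z₀, hz₀⟩ := hZ.1
  have hz₀Y : z₀ ∈ Y := by
    rw [← hAZ]
    exact ⟨b 0, hbA 0, z₀, hz₀, by simp [hb0]⟩
  obtain ⟨r, hr, z, hz, hrz⟩ := hcover _ (hAY _ (hbA (2 * (N + M) + 1)) z₀ hz₀Y)
  refine ⟨2 * (N + M) + 1 - r, ?_, z₀, hz₀, ?_⟩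
  · have := le_abs_self r
    have h1 : (0 : ℝ) ≤ N := N.cast_nonneg
    have h2 : (0 : ℝ) ≤ M := M.cast_nonneg
    change 0 < _
    linarith
  · rw [← neg_add_eq_sub, hb_add, mul_smul, hrz, smul_smul, ← hb_add, neg_add_cancel, hb0,
      one_smul]
    exact hz

/-- The dynamical core of the theorem: `b` and `u` generate an `ax + b` group commuting with `H`,
and `A` is generated by `H` and `b`. -/
theorem unipotent_stabilizes {G X : Type*} [Group G] [TopologicalSpace X] [T2Space X]
    [MulAction G X] [ContinuousConstSMul G X] {A H : Set G} {Y Z : Set X} {b u : ℝ → G}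
    (hYc : IsCompact Y) (hY : IsMinimalOn A Y) (hZc : IsCompact Z) (hZ : IsMinimalOn H Z)
    (hAZ : A • Z = Y)
    (hb_add : ∀ s t, b (s + t) = b s * b t) (hu_add : ∀ s t, u (s + t) = u s * u t)
    (hbu : ∀ t s, b t * u s = u (Real.exp t * s) * b t)
    (hbA : ∀ t, b t ∈ A) (hbH : ∀ t, ∀ h ∈ H, Commute (b t) h)
    (huH : ∀ s, ∀ h ∈ H, Commute (u s) h)
    (hA : ∀ a ∈ A, ∃ h ∈ H, ∃ t, a = h * b t)
    (hb_cont : Continuous fun p : ℝ × X => b p.1 • p.2)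
    (hu_cont : ∀ x : X, Continuous fun s : ℝ => u s • x)
    {y : X} (hy : y ∈ Z) {s₀ : ℝ} (hs₀ : s₀ ≠ 0) (hin : u s₀ • y ∈ Y) :
    ∀ s, (u s • ·) '' Z = Z := by
  have hb0 : b 0 = 1 := by
    have := hb_add 0 0
    simpa using this
  have hu0 : u 0 = 1 := by
    have := hu_add 0 0
    simpa using this
  have hbneg : ∀ t, (b t)⁻¹ = b (-t) := by
    intro t
    rw [inv_eq_iff_mul_eq_one, ← hb_add, add_neg_cancel, hb0]
  have huneg : ∀ t, (u t)⁻¹ = u (-t) := by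
    intro t
    rw [inv_eq_iff_mul_eq_one, ← hu_add, add_neg_cancel, hu0]
  let S : Subgroup G := MulAction.stabilizer G Z
  have hS : ∀ g, (∀ h ∈ H, Commute g h) → ∀ z ∈ Z, g • z ∈ Z → g ∈ S := fun g hg z hz hgz =>
    image_eq_of_smul_mem hZc.isClosed hZ hg hz hgz
  have hS' : ∀ g ∈ S, (g • ·) '' Z = Z := fun g hg => hg
  obtain ⟨c, hc, z, hz, hcz⟩ := exists_pos_smul_mem hYc hY hZc hZ hAZ hb_add hbA hbH hA hb_cont
  have hcS : b c ∈ S := hS _ (hbH c) z hz hcz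
  -- `u s₀ • y = (h * b t) • w` with `w ∈ Z`, so `b (-t) * u s₀` maps `y` back into `Z`.
  obtain ⟨t, hgS⟩ : ∃ t, b (-t) * u s₀ ∈ S := by
    rw [← hAZ] at hin
    obtain ⟨a, ha, w, hw, haw⟩ := hin
    obtain ⟨h, hh, t, rfl⟩ := hA a ha
    refine ⟨t, hS _ (fun h hh => (hbH _ h hh).mul_left (huH _ h hh)) y hy ?_⟩
    change (h * b t) • w = _ at haw
    rw [mul_smul, ← haw, smul_smul, ← (hbH t h hh).eq, ← mul_assoc, ← hb_add, neg_add_cancel, hb0,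
      one_mul, ← hZ.2.1 h hh]
    exact ⟨w, hw, rfl⟩
  let T : AddSubgroup ℝ :=
    { carrier := {s | u s ∈ S}
      zero_mem' := by
        change u 0 ∈ S
        rw [hu0]
        exact S.one_mem
      add_mem' := by
        intro s t hs ht
        change u (s + t) ∈ S
        rw [hu_add]
        exact S.mul_mem hs ht
      neg_mem' := by
        intro s hs
        change u (-s) ∈ S
        rw [← huneg]
        exact S.inv_mem hs }
  have hconj : ∀ r s, b r ∈ S → s ∈ T → Real.exp r * s ∈ T := by
    intro r s hr hs
    change u _ ∈ S
    rw [eq_mul_inv_of_mul_eq (hbu r s).symm]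
    exact S.mul_mem (S.mul_mem hr hs) (S.inv_mem hr)
  -- The commutator of `b c` and `b (-t) * u s₀` is a nontrivial unipotent element.
  have hpT : Real.exp (-t) * ((Real.exp c - 1) * s₀) ∈ T := by
    have h1 : b c * (b (-t) * u s₀) * (b c)⁻¹ * (b (-t) * u s₀)⁻¹
        = u (Real.exp (-t) * ((Real.exp c - 1) * s₀)) := by
      have h2 : b c * (b (-t) * u s₀) = u (Real.exp (-t) * (Real.exp c * s₀)) * b (-t) * b c := by
        rw [← mul_assoc, ← hb_add, hbu, mul_assoc, ← hb_add, add_comm c, Real.exp_add, mul_assoc]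
      rw [h2, mul_inv_cancel_right, _root_.mul_inv_rev, mul_assoc, ← mul_assoc (b (-t)),
        huneg, hbu, mul_inv_cancel_right, ← hu_add]
      congr 1
      ring
    change u _ ∈ S
    rw [← h1]
    exact S.mul_mem (S.mul_mem (S.mul_mem hcS hgS) (S.inv_mem hcS)) (S.inv_mem hgS)
  obtain ⟨p, hp0, hpT⟩ : ∃ p > 0, p ∈ T := by
    have hne : Real.exp (-t) * ((Real.exp c - 1) * s₀) ≠ 0 := by
      have : 1 < Real.exp c := Real.one_lt_exp_iff.2 hc
      exact mul_ne_zero (Real.exp_ne_zero _) (mul_ne_zero (by linarith) hs₀)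
    refine ⟨_, abs_pos.2 hne, ?_⟩
    rcases abs_choice (Real.exp (-t) * ((Real.exp c - 1) * s₀)) with h | h <;> rw [h]
    · exact hpT
    · exact T.neg_mem hpT
  have hcneg : b (-c) ∈ S := by
    rw [← hbneg]
    exact S.inv_mem hcS
  have hpow : ∀ k : ℕ, Real.exp (-c) ^ k * p ∈ T := by
    intro k
    induction k with
    | zero => simpa using hpT
    | succ k ih =>
      rw [pow_succ', mul_assoc]
      exact hconj _ _ hcneg ih
  -- Contraction by `b (-c)` produces arbitrarily small elements of `T`.
  have hdense : Dense (T : Set ℝ) := by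
    refine T.dense_of_not_isolated_zero fun ε hε => ?_
    obtain ⟨k, hk⟩ := exists_pow_lt_of_lt_one (div_pos hε hp0)
      (Real.exp_lt_one_iff.2 (neg_lt_zero.2 hc))
    exact ⟨_, hpow k, by positivity, (lt_div_iff₀ hp0).1 hk⟩
  have hclosed : IsClosed {s : ℝ | u s • y ∈ Z} := hZc.isClosed.preimage (hu_cont y)
  have hsub : (T : Set ℝ) ⊆ {s : ℝ | u s • y ∈ Z} := by
    intro s hs
    change u s • y ∈ Z
    rw [← hS' (u s) hs]
    exact ⟨y, hy, rfl⟩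
  intro s
  exact image_eq_of_smul_mem hZc.isClosed hZ (huH s) hy
    (closure_minimal hsub hclosed (hdense s))

/-! ### The quotient of `SL_n(ℝ)` by a discrete subgroup -/

/-- The subspace topology on `SLR n` is definitionally Mathlib's topology on `SL_n(ℝ)`, so
Mathlib's proof applies to it. -/
instance slr_isTopologicalGroup (n : ℕ) : IsTopologicalGroup (SLR n) :=
  Matrix.SpecialLinearGroup.topologicalGroup

instance slr_t2Space (n : ℕ) : T2Space (SLR n) :=
  inferInstanceAs (T2Space {A : Matrix (Fin n) (Fin n) ℝ // A.det = 1})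

/-- The coset space of a closed, not necessarily normal, subgroup is Hausdorff. -/
theorem t2Space_quotient_of_isClosed {G : Type*} [Group G] [TopologicalSpace G]
    [IsTopologicalGroup G] (Γ : Subgroup G) (hΓ : IsClosed (Γ : Set G)) : T2Space (G ⧸ Γ) := by
  rw [t2Space_iff_of_isOpenQuotientMap (π := (QuotientGroup.mk : G → G ⧸ Γ))
    QuotientGroup.isOpenQuotientMap_mk]
  have : {q : G × G | (q.1 : G ⧸ Γ) = q.2} = (fun q : G × G => q.1⁻¹ * q.2) ⁻¹' (Γ : Set G) := by
    ext q
    exact QuotientGroup.eq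
  rw [this]
  exact hΓ.preimage (by fun_prop)

/-! ### The diagonal one-parameter group transverse to the kernel of the root -/

/-- The weight `(e_i - e_j) / 2`, on which the root `α_{ij}` takes the value `1`. -/
noncomputable def halfCoroot (n : ℕ) (i j : Fin n) : Fin n → ℝ :=
  Pi.single i (1 / 2) - Pi.single j (1 / 2)

/-- The one-parameter subgroup of `A` with entries `e^{t/2}`, `e^{-t/2}` at `i`, `j` and `1`
elsewhere, so that `α_{ij} (diagFlow t) = e^t`. -/
noncomputable def diagFlow (n : ℕ) (i j : Fin n) (t : ℝ) : SLR n :=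
  ⟨Matrix.diagonal fun k => Real.exp (t * halfCoroot n i j k), by
    rw [Matrix.det_diagonal, ← Real.exp_sum, ← Finset.mul_sum]
    simp [halfCoroot, Finset.sum_sub_distrib]⟩

theorem halfCoroot_left {n : ℕ} {i j : Fin n} (hij : i ≠ j) : halfCoroot n i j i = 1 / 2 := by
  simp [halfCoroot, hij]

theorem halfCoroot_right {n : ℕ} {i j : Fin n} (hij : i ≠ j) :
    halfCoroot n i j j = -(1 / 2) := by
  simp [halfCoroot, hij.symm]

theorem diagFlow_add (n : ℕ) (i j : Fin n) (s t : ℝ) :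
    diagFlow n i j (s + t) = diagFlow n i j s * diagFlow n i j t := by
  apply Subtype.ext
  change Matrix.diagonal _ = Matrix.diagonal _ * Matrix.diagonal _
  rw [Matrix.diagonal_mul_diagonal]
  simp_rw [add_mul, Real.exp_add]

theorem diagFlow_mem (n : ℕ) (i j : Fin n) (t : ℝ) : diagFlow n i j t ∈ posDiag n := by
  refine ⟨fun k l hkl => Matrix.diagonal_apply_ne _ hkl, fun k => ?_⟩
  change 0 < Matrix.diagonal _ k k
  rw [Matrix.diagonal_apply_eq]
  exact Real.exp_pos _

theorem posDiag_eq_diagonal {n : ℕ} {g : SLR n} (hg : g ∈ posDiag n) :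
    g.1 = Matrix.diagonal fun k => g.1 k k := by
  ext k l
  by_cases h : k = l
  · subst h
    simp
  · rw [hg.1 k l h, Matrix.diagonal_apply_ne _ h]

theorem diagFlow_commute {n : ℕ} (i j : Fin n) (t : ℝ) {g : SLR n} (hg : g ∈ posDiag n) :
    Commute (diagFlow n i j t) g := by
  apply Subtype.ext
  change Matrix.diagonal _ * g.1 = g.1 * Matrix.diagonal _
  rw [posDiag_eq_diagonal hg, Matrix.diagonal_mul_diagonal, Matrix.diagonal_mul_diagonal]
  simp_rw [mul_comm]

theorem elemU_add {n : ℕ} {i j : Fin n} (hij : i ≠ j) (s t : ℝ) :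
    elemU n hij (s + t) = elemU n hij s * elemU n hij t :=
  Subtype.ext (Matrix.transvection_mul_transvection_same i j hij s t).symm

/-- A diagonal matrix conjugates `u_α(s)` to `u_α(α(a) s)`, with `α(a) = r` written without
division. -/
theorem diagonal_mul_transvection {n : ℕ} {i j : Fin n} (d : Fin n → ℝ) (s r : ℝ)
    (hr : d i = r * d j) :
    Matrix.diagonal d * Matrix.transvection i j s =
      Matrix.transvection i j (r * s) * Matrix.diagonal d := by
  rw [Matrix.transvection, Matrix.transvection, mul_add, add_mul, mul_one, one_mul]
  congr 1
  ext k l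
  rw [Matrix.diagonal_mul, Matrix.mul_diagonal, Matrix.single_apply, Matrix.single_apply]
  split_ifs with h
  · rw [← h.1, ← h.2, hr]
    ring
  · simp

theorem diagFlow_mul_elemU {n : ℕ} {i j : Fin n} (hij : i ≠ j) (t s : ℝ) :
    diagFlow n i j t * elemU n hij s = elemU n hij (Real.exp t * s) * diagFlow n i j t := by
  apply Subtype.ext
  refine diagonal_mul_transvection _ s (Real.exp t) ?_
  rw [halfCoroot_left hij, halfCoroot_right hij, ← Real.exp_add]
  congr 1
  ring

theorem elemU_commute {n : ℕ} {i j : Fin n} (hij : i ≠ j) (s : ℝ) {g : SLR n}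
    (hg : g ∈ rootKer n i j) : Commute (elemU n hij s) g := by
  apply Subtype.ext
  change Matrix.transvection i j s * g.1 = g.1 * Matrix.transvection i j s
  have h := diagonal_mul_transvection (i := i) (j := j) (fun k => g.1 k k) s 1 (by simp [hg.2])
  rw [← posDiag_eq_diagonal hg.1, one_mul] at h
  exact h.symm

theorem posDiag_decomp {n : ℕ} {i j : Fin n} (hij : i ≠ j) {a : SLR n} (ha : a ∈ posDiag n) :
    ∃ h ∈ rootKer n i j, ∃ t, a = h * diagFlow n i j t := by
  -- `t = log α(a)`
  set t : ℝ := Real.log (a.1 i i) - Real.log (a.1 j j) with ht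
  have hval : (a * diagFlow n i j (-t)).1 =
      Matrix.diagonal fun k => a.1 k k * Real.exp (-t * halfCoroot n i j k) := by
    change a.1 * Matrix.diagonal _ = _
    conv_lhs => rw [posDiag_eq_diagonal ha]
    rw [Matrix.diagonal_mul_diagonal]
  refine ⟨a * diagFlow n i j (-t), ⟨⟨fun k l hkl => ?_, fun k => ?_⟩, ?_⟩, t, ?_⟩
  · rw [hval, Matrix.diagonal_apply_ne _ hkl]
  · rw [hval, Matrix.diagonal_apply_eq]
    exact mul_pos (ha.2 k) (Real.exp_pos _)
  · rw [hval, Matrix.diagonal_apply_eq, Matrix.diagonal_apply_eq, halfCoroot_left hij,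
      halfCoroot_right hij]
    conv_lhs => rw [← Real.exp_log (ha.2 i)]
    conv_rhs => rw [← Real.exp_log (ha.2 j)]
    rw [← Real.exp_add, ← Real.exp_add]
    congr 1
    rw [ht]
    ring
  · have h0 : diagFlow n i j 0 = 1 := by
      have := diagFlow_add n i j 0 0
      simpa using this
    rw [mul_assoc, ← diagFlow_add, neg_add_cancel, h0, mul_one]

theorem continuous_diagFlow (n : ℕ) (i j : Fin n) : Continuous (diagFlow n i j) := by
  refine Continuous.subtype_mk (Continuous.matrix_diagonal ?_) _
  fun_prop

theorem continuous_elemU {n : ℕ} {i j : Fin n} (hij : i ≠ j) : Continuous (elemU n hij) := by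
  refine Continuous.subtype_mk ?_ _
  unfold Matrix.transvection
  refine continuous_const.add (continuous_matrix fun k l => ?_)
  simp only [Matrix.single_apply]
  split_ifs <;> fun_prop

/-- Let `Γ` be a lattice in `G = SL_n(ℝ)`, `Y` a compact `A`-minimal set, `α = α_{ij}` a
root, and `Y_α ⊆ Y` an `A_α`-minimal subset with `A•Y_α = Y`. If `u_α(s₀)•y₁ ∈ Y` for some
`y₁ ∈ Y_α` and `s₀ ≠ 0`, then `u_α(s₀)•y₁ ∈ Y_α` and the root group `U_α` stabilizes `Y_α`. -/
theorem statement_6 (n : ℕ) (hn : 2 ≤ n) (Γ : Subgroup (SLR n)) (hΓ : IsLattice Γ)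
    (i j : Fin n) (hij : i ≠ j)
    (Y : Set (SLR n ⧸ Γ)) (hYc : IsCompact Y) (hYmin : IsMinimalOn (posDiag n) Y)
    (Yα : Set (SLR n ⧸ Γ)) (hsub : Yα ⊆ Y) (hYαc : IsCompact Yα)
    (hYαmin : IsMinimalOn (rootKer n i j) Yα) (hAY : posDiag n • Yα = Y)
    (y₁ : SLR n ⧸ Γ) (hy₁ : y₁ ∈ Yα) (s₀ : ℝ) (hs₀ : s₀ ≠ 0)
    (hin : elemU n hij s₀ • y₁ ∈ Y) :
    elemU n hij s₀ • y₁ ∈ Yα ∧ ∀ s : ℝ, (elemU n hij s • ·) '' Yα = Yα := by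
  have hdisc : DiscreteTopology Γ := hΓ.1
  have hT2 : T2Space (SLR n ⧸ Γ) :=
    t2Space_quotient_of_isClosed Γ Subgroup.isClosed_of_discrete
  have hall := unipotent_stabilizes (u := elemU n hij) (b := diagFlow n i j) hYc hYmin hYαc hYαmin
    hAY (diagFlow_add n i j) (elemU_add hij) (diagFlow_mul_elemU hij) (diagFlow_mem n i j)
    (fun t h hh => diagFlow_commute i j t hh.1) (fun s h hh => elemU_commute hij s hh)
    (fun a ha => posDiag_decomp hij ha)
    (((continuous_diagFlow n i j).comp continuous_fst).smul continuous_snd)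
    (fun x => (continuous_elemU hij).smul continuous_const) hy₁ hs₀ hin
  refine ⟨?_, hall⟩
  rw [← hall s₀]
  exact ⟨y₁, hy₁, rfl⟩
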